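/- Let K be an algebraically closed field of characteristic zero, B a finitely generated commutative K-algebra that is an integral domain, and J a proper ideal of B such that the quotient K-algebra B/J admits no nonzero LND, and such that every LND D of B[u] maps the extension ideal J·B[u] into itself. Then HD*(B[u]) ≠ B[u]. -/

import Mathlib

/-!
Let `R = B ⧸ J`, a nonzero rigid algebra (no nonzero LND). An LND `D` of `B[u]` with slice `s`
preserves `J B[u]`, so it induces an LND of `R[u]`, for which the image of `s` is a slice.
The main point is that every LND `D` of `R[u]` kills `R` (`IsLND.apply_C_eq_zero_of_degBound`).
Then `D = (D u) • d/du`, the slice makes `D u` a unit, and `ker D = R`. Hence the generators of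
`HD*(B[u])` all map into the constants `R`, whereas `u` does not.

For the main point, recall that `R` may have zero divisors and nilpotents. Since `R` is finitely
generated, `D` raises `u`-degrees by at most some `e`. Its component of degree `e` is
`T = u^e (δ + a u d/du)`, with `δ` a derivation of `R` and `a ∈ R`, and `T` is again an LND
(`IsLND.topPart`).
* As `u` divides `T u = a u^(e+1)`, the element `T u` is nilpotent, so `a` is nilpotent. This
  generalises the fact that in a domain `u ∣ T u` forces `T u = 0`; the proof looks, modulo an
  arbitrary prime `P`, at the largest `m` with `T^m g ∉ P`, which is additive in `g` by the
  Leibniz rule (`HasOrd.mul`, `IsLND.isNilpotent_of_dvd`).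
* Subtracting a nilpotent multiple of `u^(e+1) d/du` from an LND leaves an LND, because nothing
  changes on the quotients `N^i / N^(i+1)` by powers of the nilradical `N`, which is nilpotent
  (`IsLND.add_nilpotent_smul`).
* So `u^e δ` is an LND, hence so is `δ`, and `δ = 0` by rigidity. Moreover
  `D - a u^(e+1) d/du` is an LND that agrees with `D` on `R` and has smaller degree; induct on `e`.
-/

/-- A K-derivation is locally nilpotent (an LND) if for every element `a`
there exists `n ≥ 1` with `D^[n] a = 0`. -/
def IsLND {K A : Type*} [CommRing K] [CommRing A] [Algebra K A]
    (D : Derivation K A A) : Prop :=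
  ∀ a : A, ∃ n : ℕ, 1 ≤ n ∧ (⇑D)^[n] a = 0

/-- The modified Derksen invariant `HD*(A)`: the K-subalgebra of `A` generated by
the union of the kernels of all LNDs of `A` that possess a slice. -/
def HDStar (K A : Type*) [CommRing K] [CommRing A] [Algebra K A] : Subalgebra K A :=
  Algebra.adjoin K {a : A | ∃ D : Derivation K A A, IsLND D ∧ (∃ s : A, D s = 1) ∧ D a = 0}

open Polynomial

/-! ### Iterates of derivations -/

section LND

variable {K S : Type*} [CommRing K] [CommRing S] [Algebra K S]

theorem derivation_iterate_add (D : Derivation K S S) (n : ℕ) (a b : S) :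
    (⇑D)^[n] (a + b) = (⇑D)^[n] a + (⇑D)^[n] b := by
  induction n with
  | zero => rfl
  | succ n ih => simp only [Function.iterate_succ_apply', ih, map_add]

theorem derivation_iterate_zero (D : Derivation K S S) (n : ℕ) : (⇑D)^[n] 0 = 0 :=
  Function.iterate_fixed (map_zero D) n

theorem derivation_iterate_eq_zero_of_le (D : Derivation K S S) {a : S} {n m : ℕ}
    (h : (⇑D)^[n] a = 0) (hnm : n ≤ m) : (⇑D)^[m] a = 0 := by
  obtain ⟨k, rfl⟩ := Nat.exists_eq_add_of_le' hnm
  rw [Function.iterate_add_apply, h, derivation_iterate_zero]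

/-- The bound `1 ≤ n` in the definition of an LND is harmless. -/
theorem isLND_of_exists {D : Derivation K S S} (h : ∀ a, ∃ n, (⇑D)^[n] a = 0) : IsLND D := by
  intro a
  obtain ⟨n, hn⟩ := h a
  exact ⟨n + 1, by lia, derivation_iterate_eq_zero_of_le D hn (by lia)⟩

/-- The general Leibniz rule. -/
theorem derivation_iterate_mul (D : Derivation K S S) (n : ℕ) (a b : S) :
    (⇑D)^[n] (a * b) = ∑ ij ∈ Finset.HasAntidiagonal.antidiagonal n,
      n.choose ij.1 • ((⇑D)^[ij.1] a * (⇑D)^[ij.2] b) := by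
  induction n with
  | zero => simp
  | succ n ih =>
    rw [Finset.sum_antidiagonal_choose_succ_nsmul (M := S)
      (fun i j => (⇑D)^[i] a * (⇑D)^[j] b) n]
    simp only [Function.iterate_succ_apply', ih, map_sum, map_nsmul, Derivation.leibniz,
      smul_add, Finset.sum_add_distrib, add_right_inj, smul_eq_mul]
    refine Finset.sum_congr rfl fun ⟨i, j⟩ hij ↦ ?_
    rw [n.choose_symm_of_eq_add (Finset.HasAntidiagonal.mem_antidiagonal.1 hij).symm, mul_comm]

end LND

/-! ### Locally nilpotent derivations and the nilradical -/

section Nilpotent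

variable {K S : Type*} [Field K] [CharZero K] [CommRing S] [Algebra K S]

/-- `m` is the order of `g` along `D` modulo the ideal `P`: the largest exponent for which
`D^m g` is not in `P`. -/
def HasOrd (D : Derivation K S S) (P : Ideal S) (g : S) (m : ℕ) : Prop :=
  (⇑D)^[m] g ∉ P ∧ ∀ i, m < i → (⇑D)^[i] g ∈ P

omit [CharZero K] in
theorem exists_hasOrd {D : Derivation K S S} (hD : IsLND D) (P : Ideal S) {g : S} {j : ℕ}
    (hj : (⇑D)^[j] g ∉ P) : ∃ m, j ≤ m ∧ HasOrd D P g m := by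
  classical
  obtain ⟨n, -, hn⟩ := hD g
  have hz : ∀ i, n ≤ i → (⇑D)^[i] g ∈ P := fun i hi => by
    rw [derivation_iterate_eq_zero_of_le D hn hi]; exact P.zero_mem
  have hjn : j ≤ n := by
    by_contra h
    exact hj (hz j (by lia))
  refine ⟨Nat.findGreatest (fun i => (⇑D)^[i] g ∉ P) n, Nat.le_findGreatest hjn hj,
    Nat.findGreatest_spec (P := fun i => (⇑D)^[i] g ∉ P) hjn hj, fun i hi => ?_⟩
  by_cases hin : i ≤ n
  · exact not_not.1 (Nat.findGreatest_is_greatest hi hin)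
  · exact hz i (by lia)

/-- Orders modulo a prime are additive: modulo `P`, at most one term of the general Leibniz
rule survives, and its binomial coefficient is a unit in characteristic zero. -/
theorem HasOrd.mul {D : Derivation K S S} {P : Ideal S} [hP : P.IsPrime] {g h : S} {m n : ℕ}
    (hg : HasOrd D P g m) (hh : HasOrd D P h n) : HasOrd D P (g * h) (m + n) := by
  have key : ∀ i j, (m < i ∨ n < j) → (⇑D)^[i] g * (⇑D)^[j] h ∈ P := by
    rintro i j (hi | hj)
    · exact P.mul_mem_right _ (hg.2 i hi)
    · exact P.mul_mem_left _ (hh.2 j hj)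
  constructor
  · rw [derivation_iterate_mul, ← Finset.add_sum_erase _ _
      (show (m, n) ∈ Finset.HasAntidiagonal.antidiagonal (m + n) by simp)]
    intro hmem
    have h2 : ∑ x ∈ (Finset.HasAntidiagonal.antidiagonal (m + n)).erase (m, n),
        (m + n).choose x.1 • ((⇑D)^[x.1] g * (⇑D)^[x.2] h) ∈ P := by
      refine P.sum_mem fun x hx => nsmul_mem (key _ _ ?_) _
      rw [Finset.mem_erase, Finset.HasAntidiagonal.mem_antidiagonal, Ne, Prod.ext_iff] at hx
      simp only at hx
      lia
    have h3 := (P.add_mem_iff_left h2).1 hmem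
    simp only at h3
    have hc : (((m + n).choose m : ℕ) : K) ≠ 0 :=
      Nat.cast_ne_zero.2 (Nat.choose_pos (by lia)).ne'
    have h4 : (⇑D)^[m] g * (⇑D)^[n] h ∈ P := by
      have := P.mul_mem_left (algebraMap K S (((m + n).choose m : ℕ) : K)⁻¹) h3
      rwa [nsmul_eq_mul, ← mul_assoc, ← map_natCast (algebraMap K S), ← map_mul,
        inv_mul_cancel₀ hc, map_one, one_mul] at this
    exact (hP.mem_or_mem h4).elim hg.1 hh.1
  · intro i hi
    rw [derivation_iterate_mul]
    refine P.sum_mem fun x hx => nsmul_mem (key _ _ ?_) _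
    rw [Finset.HasAntidiagonal.mem_antidiagonal] at hx
    lia

theorem HasOrd.pow_succ {D : Derivation K S S} {P : Ideal S} [P.IsPrime] {g : S} {m : ℕ}
    (hg : HasOrd D P g m) (k : ℕ) : ∃ n, HasOrd D P (g ^ (k + 1)) n := by
  induction k with
  | zero => exact ⟨m, by simpa using hg⟩
  | succ k ih =>
    obtain ⟨n, hn⟩ := ih
    exact ⟨n + m, by rw [_root_.pow_succ]; exact hn.mul hg⟩

theorem IsLND.map_nilradical {D : Derivation K S S} (hD : IsLND D) {x : S}
    (hx : x ∈ nilradical S) : D x ∈ nilradical S := by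
  rw [nilradical_eq_sInf, Ideal.mem_sInf]
  intro P (hP : P.IsPrime)
  by_contra h
  obtain ⟨m, -, hm⟩ := exists_hasOrd hD P (g := x) (j := 1) (by simpa using h)
  obtain ⟨k, hk⟩ := mem_nilradical.1 hx
  obtain ⟨n, hn⟩ := hm.pow_succ k
  apply hn.1
  rw [pow_eq_zero_of_le (Nat.le_succ k) hk, derivation_iterate_zero]
  exact P.zero_mem

/-- An analogue, over rings with zero divisors, of the fact that an LND `D` of a domain with
`u ∣ D u` satisfies `D u = 0`.
Modulo a prime `P` not containing `D u`, the order of `u * b` would be at least that of `u`, but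
that of `D u` is smaller. -/
theorem IsLND.isNilpotent_of_dvd {D : Derivation K S S} (hD : IsLND D) {u b : S}
    (h : D u = u * b) : IsNilpotent (D u) := by
  rw [← mem_nilradical, nilradical_eq_sInf, Ideal.mem_sInf]
  intro P (hP : P.IsPrime)
  by_contra hu
  obtain ⟨m, -, hm⟩ := exists_hasOrd hD P (g := u) (j := 1) (by simpa using hu)
  have hb : b ∉ P := fun hb => hu (h ▸ P.mul_mem_left u hb)
  obtain ⟨n, -, hn⟩ := exists_hasOrd hD P (g := b) (j := 0) (by simpa using hb)
  apply (hm.mul hn).1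
  rw [← h, ← Function.iterate_succ_apply]
  exact hm.2 _ (by lia)

omit [CharZero K] in
theorem derivation_map_ideal_pow (D : Derivation K S S) {I : Ideal S}
    (h : ∀ x ∈ I, D x ∈ I) (i : ℕ) : ∀ x ∈ I ^ i, D x ∈ I ^ i := by
  induction i with
  | zero => simp
  | succ i ih =>
    intro x hx
    rw [pow_succ] at hx ⊢
    refine Submodule.mul_induction_on hx (fun a ha b hb => ?_) (fun a b ha hb => ?_)
    · rw [D.leibniz, smul_eq_mul, smul_eq_mul, mul_comm b]
      exact add_mem (Ideal.mul_mem_mul ha (h b hb)) (Ideal.mul_mem_mul (ih a ha) hb)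
    · rw [map_add]; exact add_mem ha hb

/-- Adding `a • F` to an LND, where `a` is nilpotent and `F` preserves the nilradical `N`, gives
an LND: `D` and `D + a • F` induce the same map on each quotient `N^i / N^(i+1)`. -/
theorem IsLND.add_nilpotent_smul [IsNoetherianRing S] {D : Derivation K S S} (hD : IsLND D)
    (F : Derivation K S S) (hF : ∀ x ∈ nilradical S, F x ∈ nilradical S) {a : S}
    (ha : IsNilpotent a) : IsLND (D + a • F) := by
  set N := nilradical S with hN
  have hDN := derivation_map_ideal_pow D (I := N) fun x hx => hD.map_nilradical hx
  have hFN := derivation_map_ideal_pow F (I := N) hF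
  have haF : ∀ i, ∀ x ∈ N ^ i, a * F x ∈ N ^ (i + 1) := fun i x hx => by
    rw [pow_succ']
    exact Ideal.mul_mem_mul (mem_nilradical.2 ha) (hFN i x hx)
  have hE : ∀ i, ∀ x ∈ N ^ i, (D + a • F) x ∈ N ^ i := fun i x hx => by
    simp only [Derivation.add_apply, Derivation.smul_apply, smul_eq_mul]
    exact add_mem (hDN i x hx) (Ideal.pow_le_pow_right (Nat.le_succ i) (haF i x hx))
  have hDit : ∀ n i, ∀ x ∈ N ^ i, (⇑D)^[n] x ∈ N ^ i := fun n i x hx => by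
    induction n with
    | zero => exact hx
    | succ n ih => rw [Function.iterate_succ_apply']; exact hDN i _ ih
  have hdiff : ∀ n i, ∀ x ∈ N ^ i,
      (⇑(D + a • F))^[n] x - (⇑D)^[n] x ∈ N ^ (i + 1) := fun n i x hx => by
    induction n with
    | zero => simp
    | succ n ih =>
      have h1 := add_mem (hE _ _ ih) (haF i _ (hDit n i x hx))
      rw [Function.iterate_succ_apply', Function.iterate_succ_apply']
      convert h1 using 1
      rw [map_sub]
      simp only [Derivation.add_apply, Derivation.smul_apply, smul_eq_mul]
      ring
  have hpow : ∀ x i, ∃ n, (⇑(D + a • F))^[n] x ∈ N ^ i := fun x i => by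
    induction i with
    | zero => exact ⟨0, by simp⟩
    | succ i ih =>
      obtain ⟨n, hn⟩ := ih
      obtain ⟨m, -, hm⟩ := hD ((⇑(D + a • F))^[n] x)
      refine ⟨m + n, ?_⟩
      have := hdiff m i _ hn
      rwa [hm, sub_zero, ← Function.iterate_add_apply] at this
  obtain ⟨k, hk⟩ := IsNoetherianRing.isNilpotent_nilradical S
  refine isLND_of_exists fun x => ?_
  obtain ⟨n, hn⟩ := hpow x k
  rw [hN, hk] at hn
  exact ⟨n, hn⟩

end Nilpotent

/-! ### Derivations of polynomial rings -/

section Poly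

variable {K R : Type*} [Field K] [CommRing R] [Algebra K R]

/-- The extension of a derivation `δ` of `R` to `R[X]` acting coefficientwise, so that `X` is
a constant. -/
noncomputable def coeffDer (δ : Derivation K R R) : Derivation K R[X] R[X] :=
  (PolynomialModule.equivPolynomialSelf : PolynomialModule R R ≃ₗ[R[X]] R[X]).compDer δ.mapCoeffs

theorem coeff_coeffDer (δ : Derivation K R R) (p : R[X]) (i : ℕ) :
    (coeffDer δ p).coeff i = δ (p.coeff i) := rfl

theorem coeffDer_C_mul_X_pow (δ : Derivation K R R) (r : R) (k : ℕ) :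
    coeffDer δ (C r * X ^ k) = C (δ r) * X ^ k := by
  ext i
  rw [coeff_coeffDer, coeff_C_mul_X_pow, coeff_C_mul_X_pow]
  split_ifs <;> simp

variable (K R) in
/-- The derivation `d/dX` of `R[X]`, regarded as a `K`-derivation. -/
noncomputable def polyDer : Derivation K R[X] R[X] :=
  (derivative' : Derivation R R[X] R[X]).restrictScalars K

theorem polyDer_apply (p : R[X]) : polyDer K R p = derivative p := rfl

theorem isLND_polyDer : IsLND (polyDer K R) := isLND_of_exists fun p =>
  ⟨p.natDegree + 1, iterate_derivative_eq_zero (Nat.lt_succ_self _)⟩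

theorem derivation_poly_apply (D : Derivation K R[X] R[X]) (r : R) (k : ℕ) :
    D (C r * X ^ k) = C r * ((k : R[X]) * X ^ (k - 1)) * D X + D (C r) * X ^ k := by
  rw [D.leibniz, D.leibniz_pow]
  simp only [smul_eq_mul, nsmul_eq_mul]
  ring

/-- `D` raises `X`-degrees by at most `e`. -/
def DegBound (D : Derivation K R[X] R[X]) (e : ℕ) : Prop :=
  (∀ r, (D (C r)).natDegree ≤ e) ∧ (D X).natDegree ≤ e + 1

/-- The derivation `r ↦ [X^e] D r` of `R`. -/
noncomputable def coeffAt (D : Derivation K R[X] R[X]) (e : ℕ) : Derivation K R R :=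
  Derivation.mk'
    { toFun := fun r => (D (C r)).coeff e
      map_add' := fun x y => by simp
      map_smul' := fun c x => by
        rw [← smul_C, D.map_smul, coeff_smul]; rfl }
    (fun x y => by
      simp [D.leibniz])

theorem coeffAt_apply (D : Derivation K R[X] R[X]) (e : ℕ) (r : R) :
    coeffAt D e r = (D (C r)).coeff e := rfl

/-- The component of degree `e` of `D` for the grading of `R[X]` by powers of `X`. -/
noncomputable def topPart (D : Derivation K R[X] R[X]) (e : ℕ) : Derivation K R[X] R[X] :=
  (X ^ e : R[X]) • coeffDer (coeffAt D e) +
    C ((D X).coeff (e + 1)) • ((X ^ (e + 1) : R[X]) • polyDer K R)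

theorem topPart_C_mul_X_pow (D : Derivation K R[X] R[X]) (e : ℕ) (r : R) (k : ℕ) :
    topPart D e (C r * X ^ k) =
      C ((D (C r)).coeff e + r * k * (D X).coeff (e + 1)) * X ^ (k + e) := by
  simp only [topPart, Derivation.add_apply, Derivation.smul_apply, coeffDer_C_mul_X_pow,
    polyDer_apply, coeffAt_apply, smul_eq_mul, derivative_C_mul_X_pow, C_add, C_mul]
  cases k with
  | zero => simp
  | succ k => simp; ring

theorem DegBound.apply {D : Derivation K R[X] R[X]} {e : ℕ} (h : DegBound D e) (k : ℕ) (g : R[X])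
    (hg : g.natDegree ≤ k) : (D g).natDegree ≤ k + e ∧
      (D g).coeff (k + e) =
        (D (C (g.coeff k))).coeff e + g.coeff k * k * (D X).coeff (e + 1) := by
  refine induction_with_natDegree_le
    (fun g => (D g).natDegree ≤ k + e ∧ (D g).coeff (k + e) =
        (D (C (g.coeff k))).coeff e + g.coeff k * k * (D X).coeff (e + 1)) k ?_ ?_ ?_ g hg
  · simp
  · intro j r _ hj
    have h1 : (D (C r * X ^ j)).natDegree ≤ j + e := by
      rw [derivation_poly_apply]
      refine natDegree_add_le_of_degree_le ?_ ?_
      · cases j with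
        | zero => simp
        | succ j =>
          have a1 : (C r * (((j + 1 : ℕ) : R[X]) * X ^ (j + 1 - 1))).natDegree ≤ j := by
            rw [← mul_assoc, ← C_eq_natCast, ← C_mul]
            exact natDegree_C_mul_X_pow_le _ _
          exact (natDegree_mul_le_of_le a1 h.2).trans (by lia)
      · exact (natDegree_mul_le_of_le (h.1 r) (natDegree_X_pow_le j)).trans (by lia)
    refine ⟨h1.trans (by lia), ?_⟩
    rcases hj.lt_or_eq with hlt | rfl
    · rw [coeff_eq_zero_of_natDegree_lt (h1.trans_lt (by lia)), coeff_C_mul_X_pow,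
        if_neg hlt.ne']
      simp
    · rw [derivation_poly_apply, coeff_add, add_comm j e, coeff_mul_X_pow, coeff_C_mul_X_pow,
        if_pos rfl, add_comm]
      congr 1
      cases j with
      | zero => simp
      | succ j =>
        rw [← mul_assoc, ← C_eq_natCast, ← C_mul, mul_assoc, coeff_C_mul, Nat.add_sub_cancel,
          show e + (j + 1) = (e + 1) + j by lia, mul_comm (X ^ j), coeff_mul_X_pow]
  · intro f g _ _ hf hg
    refine ⟨by rw [map_add]; exact natDegree_add_le_of_degree_le hf.1 hg.1, ?_⟩
    rw [map_add, coeff_add, hf.2, hg.2, coeff_add, C_add, map_add, coeff_add]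
    ring

/-- The top-degree component of an LND is an LND. -/
theorem IsLND.topPart {D : Derivation K R[X] R[X]} (hD : IsLND D) {e : ℕ} (h : DegBound D e) :
    IsLND (topPart D e) := by
  have key : ∀ (r : R) (k n : ℕ), ((⇑D)^[n] (C r * X ^ k)).natDegree ≤ k + n * e ∧
      (⇑(_root_.topPart D e))^[n] (C r * X ^ k) =
        C (((⇑D)^[n] (C r * X ^ k)).coeff (k + n * e)) * X ^ (k + n * e) := by
    intro r k n
    induction n with
    | zero => exact ⟨by simpa using natDegree_C_mul_X_pow_le r k, by simp⟩
    | succ n ih =>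
      have h1 := h.apply _ _ ih.1
      have h2 : k + (n + 1) * e = k + n * e + e := by ring
      rw [Function.iterate_succ_apply', Function.iterate_succ_apply', ih.2,
        topPart_C_mul_X_pow, h2]
      exact ⟨h1.1, by rw [h1.2]⟩
  refine isLND_of_exists fun p => ?_
  induction p using Polynomial.induction_on' with
  | add p q hp hq =>
    obtain ⟨n, hn⟩ := hp
    obtain ⟨m, hm⟩ := hq
    refine ⟨n + m, ?_⟩
    rw [derivation_iterate_add, derivation_iterate_eq_zero_of_le _ hn (by lia),
      derivation_iterate_eq_zero_of_le _ hm (by lia), add_zero]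
  | monomial k r =>
    obtain ⟨n, -, hn⟩ := hD (C r * X ^ k)
    exact ⟨n, by rw [← C_mul_X_pow_eq_monomial, (key r k n).2, hn]; simp⟩

/-- If `X^e • δ` is locally nilpotent on `R[X]`, then `δ` is locally nilpotent on `R`. -/
theorem isLND_of_X_pow_smul_coeffDer {δ : Derivation K R R} {e : ℕ}
    (h : IsLND ((X ^ e : R[X]) • coeffDer δ)) : IsLND δ := by
  refine isLND_of_exists fun r => ?_
  have key : ∀ n, (⇑((X ^ e : R[X]) • coeffDer δ))^[n] (C r) =
      C ((⇑δ)^[n] r) * X ^ (n * e) := fun n => by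
    induction n with
    | zero => simp
    | succ n ih =>
      rw [Function.iterate_succ_apply', ih, Function.iterate_succ_apply', Derivation.smul_apply,
        coeffDer_C_mul_X_pow, smul_eq_mul]
      ring
  obtain ⟨n, -, hn⟩ := h (C r)
  refine ⟨n, ?_⟩
  rw [key n] at hn
  simpa using congrArg (fun p => p.coeff (n * e)) hn

variable [CharZero K]

theorem polyDer_map_nilradical (q : R[X]) : ∀ x ∈ nilradical R[X],
    (q • polyDer K R) x ∈ nilradical R[X] := fun _ hx =>
  Ideal.mul_mem_left _ q (isLND_polyDer.map_nilradical hx)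

/-- The top-degree part of an LND of `R[X]`, for `R` rigid, is a nilpotent multiple of `d/dX`. -/
theorem IsLND.topPart_trivial [IsNoetherianRing R]
    (hR : ∀ δ : Derivation K R R, IsLND δ → δ = 0) {D : Derivation K R[X] R[X]} (hD : IsLND D)
    {e : ℕ} (h : DegBound D e) :
    coeffAt D e = 0 ∧ IsNilpotent (C ((D X).coeff (e + 1))) := by
  have hT := hD.topPart h
  have hX : _root_.topPart D e X = C ((D X).coeff (e + 1)) * X ^ (e + 1) := by
    have := topPart_C_mul_X_pow D e 1 1
    simpa [add_comm 1 e] using this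
  have hnil : IsNilpotent (C ((D X).coeff (e + 1))) := by
    have h1 := hT.isNilpotent_of_dvd (u := X) (b := C ((D X).coeff (e + 1)) * X ^ e)
      (by rw [hX]; ring)
    rw [hX] at h1
    refine isNilpotent_C_iff.2 ?_
    simpa using Polynomial.isNilpotent_iff.1 h1 (e + 1)
  refine ⟨hR _ (isLND_of_X_pow_smul_coeffDer (e := e) ?_), hnil⟩
  have h2 := hT.add_nilpotent_smul _ (polyDer_map_nilradical (K := K) (X ^ (e + 1)))
    (a := -C ((D X).coeff (e + 1))) hnil.neg
  convert h2 using 1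
  refine Derivation.ext fun p => ?_
  simp [_root_.topPart]

/-- The core of the argument, by induction on the degree bound: the top-degree part is a
nilpotent multiple of `d/dX`, and subtracting it yields an LND with the same restriction to `R`
and a smaller degree bound. -/
theorem IsLND.apply_C_eq_zero_of_degBound [IsNoetherianRing R]
    (hR : ∀ δ : Derivation K R R, IsLND δ → δ = 0) (e : ℕ) :
    ∀ D : Derivation K R[X] R[X], IsLND D → DegBound D e → ∀ r, D (C r) = 0 := by
  induction e with
  | zero =>
    intro D hD h r
    have h1 : (D (C r)).coeff 0 = 0 := by
      rw [← coeffAt_apply, (hD.topPart_trivial hR h).1, Derivation.zero_apply]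
    rw [eq_C_of_natDegree_le_zero (h.1 r), h1, C_0]
  | succ e ih =>
    intro D hD h r
    obtain ⟨h0, hnil⟩ := hD.topPart_trivial hR h
    have h2 := hD.add_nilpotent_smul _ (polyDer_map_nilradical (K := K) (X ^ (e + 1 + 1)))
      (a := -C ((D X).coeff (e + 1 + 1))) hnil.neg
    have hC : ∀ r, (D + -C ((D X).coeff (e + 1 + 1)) •
        ((X ^ (e + 1 + 1) : R[X]) • polyDer K R)) (C r) = D (C r) := fun r => by
      simp [polyDer_apply]
    rw [← hC]
    refine ih _ h2 ⟨fun r => ?_, ?_⟩ r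
    · rw [hC]
      refine natDegree_le_pred (n := e + 1) (h.1 r) ?_
      rw [← coeffAt_apply, h0, Derivation.zero_apply]
    · refine natDegree_le_pred (n := e + 1 + 1) ?_ ?_
      · simp only [Derivation.add_apply, Derivation.smul_apply, polyDer_apply, derivative_X,
          smul_eq_mul, mul_one, neg_mul]
        exact natDegree_add_le_of_degree_le h.2
          (by rw [natDegree_neg]; exact natDegree_C_mul_X_pow_le _ _)
      · simp [polyDer_apply]

omit [CharZero K] in
/-- On a finitely generated algebra every derivation of `R[X]` has bounded degree. -/
theorem exists_degBound [Algebra.FiniteType K R] (D : Derivation K R[X] R[X]) :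
    ∃ e, DegBound D e := by
  obtain ⟨s, hs⟩ := Algebra.FiniteType.out (R := K) (A := R)
  set e := max (s.sup fun r => (D (C r)).natDegree) (D X).natDegree
  refine ⟨e, fun r => ?_, (le_max_right _ _).trans (Nat.le_succ e)⟩
  have hr : r ∈ Algebra.adjoin K (s : Set R) := hs ▸ Algebra.mem_top
  induction hr using Algebra.adjoin_induction with
  | mem x hx =>
    exact (Finset.le_sup (f := fun r => (D (C r)).natDegree) hx).trans (le_max_left _ _)
  | algebraMap c =>
    have : D (C (algebraMap K R c)) = 0 := D.map_algebraMap c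
    simp [this]
  | add x y _ _ hx hy =>
    rw [C_add, map_add]; exact natDegree_add_le_of_degree_le hx hy
  | mul x y _ _ hx hy =>
    rw [C_mul, D.leibniz]
    exact natDegree_add_le_of_degree_le ((natDegree_C_mul_le _ _).trans hy)
      ((natDegree_C_mul_le _ _).trans hx)

/-- Over a rigid finitely generated algebra `R`, an LND of `R[X]` with a slice has constants
only in its kernel. -/
theorem IsLND.eq_C_of_slice [Algebra.FiniteType K R]
    (hR : ∀ δ : Derivation K R R, IsLND δ → δ = 0) {D : Derivation K R[X] R[X]} (hD : IsLND D)
    {s : R[X]} (hs : D s = 1) {g : R[X]} (hg : D g = 0) : ∃ r, g = C r := by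
  have : IsNoetherianRing R := Algebra.FiniteType.isNoetherianRing K R
  obtain ⟨e, he⟩ := exists_degBound D
  have h0 := hD.apply_C_eq_zero_of_degBound hR e D he
  -- Hence `D = (D X) • d/dX`, and `D s = 1` makes `D X` a unit.
  have hform : ∀ p : R[X], D p = derivative p * D X := fun p => by
    induction p using Polynomial.induction_on' with
    | add p q hp hq => rw [map_add, map_add, hp, hq, add_mul]
    | monomial k r =>
      rw [← C_mul_X_pow_eq_monomial, derivation_poly_apply, h0, derivative_C_mul_X_pow]
      simp [mul_assoc]
  have hunit : IsUnit (D X) := by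
    rw [hform, mul_comm] at hs
    exact IsUnit.of_mul_eq_one _ hs
  have hder : derivative g = 0 := by
    rw [hform] at hg
    exact hunit.mul_left_eq_zero.1 hg
  refine ⟨g.coeff 0, ?_⟩
  ext n
  cases n with
  | zero => simp
  | succ n =>
    have h1 : g.coeff (n + 1) * ((n : R) + 1) = 0 := by
      rw [← coeff_derivative, hder, coeff_zero]
    have hu : IsUnit ((n : R) + 1) := by
      have : ((n : K) + 1) ≠ 0 := Nat.cast_add_one_ne_zero n
      simpa using (IsUnit.mk0 _ this).map (algebraMap K R)
    rw [hu.mul_left_eq_zero.1 h1, coeff_C_succ]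

end Poly

/-! ### The modified Derksen invariant -/

theorem stmt8 {K B : Type*} [Field K] [IsAlgClosed K] [CharZero K]
    [CommRing B] [IsDomain B] [Algebra K B] [Algebra.FiniteType K B]
    (J : Ideal B) (hJ : J ≠ ⊤)
    (hquot : ∀ D : Derivation K (B ⧸ J) (B ⧸ J), IsLND D → D = 0)
    (hii : ∀ D : Derivation K (Polynomial B) (Polynomial B), IsLND D →
      ∀ x ∈ J.map (Polynomial.C : B →+* Polynomial B),
        D x ∈ J.map (Polynomial.C : B →+* Polynomial B)) :
    HDStar K (Polynomial B) ≠ ⊤ := by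
  have : Nontrivial (B ⧸ J) := Ideal.Quotient.nontrivial_iff.2 hJ
  have : Algebra.FiniteType K (B ⧸ J) :=
    Algebra.FiniteType.of_surjective (Ideal.Quotient.mkₐ K J) (Ideal.Quotient.mkₐ_surjective K J)
  let π : B[X] →ₐ[K] (B ⧸ J)[X] := mapAlgHom (Ideal.Quotient.mkₐ K J)
  have hπ : Function.Surjective π :=
    Polynomial.map_surjective _ (Ideal.Quotient.mkₐ_surjective K J)
  have hker : ∀ x, π x = 0 ↔ x ∈ J.map (C : B →+* B[X]) := fun x => by
    rw [Ideal.mem_map_C_iff, Polynomial.ext_iff]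
    refine forall_congr' fun n => ?_
    rw [← Ideal.Quotient.eq_zero_iff_mem]
    simp [π]
  have hgen : HDStar K B[X] ≤ (CAlgHom (R := K) (A := B ⧸ J)).range.comap π := by
    refine Algebra.adjoin_le ?_
    rintro g ⟨D, hD, ⟨s, hs⟩, hg⟩
    have hd : ∀ x, π x = 0 → π (D x) = 0 := fun x hx =>
      (hker _).2 (hii D hD x ((hker x).1 hx))
    let D' : Derivation K (B ⧸ J)[X] (B ⧸ J)[X] := Derivation.liftOfSurjective hπ hd
    have hD' : ∀ x, D' (π x) = π (D x) := Derivation.liftOfSurjective_apply hπ hd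
    have hLND : IsLND D' := isLND_of_exists fun y => by
      obtain ⟨x, rfl⟩ := hπ y
      obtain ⟨n, -, hn⟩ := hD x
      refine ⟨n, ?_⟩
      rw [← Function.Semiconj.iterate_right (f := π) (ga := D) (gb := D')
        (fun x => (hD' x).symm) n x, hn, map_zero]
    obtain ⟨r, hr⟩ := hLND.eq_C_of_slice hquot (s := π s) (by rw [hD', hs, map_one])
      (g := π g) (by rw [hD', hg, map_zero])
    exact ⟨r, hr.symm⟩
  intro htop
  obtain ⟨r, hr⟩ : π X ∈ (CAlgHom (R := K) (A := B ⧸ J)).range :=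
    hgen (htop ▸ Algebra.mem_top)
  have h1 : (C r : (B ⧸ J)[X]) = X := by simpa [π] using hr
  exact X_ne_C r h1.symm
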